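/- Let v1 = 1 − ε1 and v2 = 1 − ε2 with ε1, ε2 ∈ (0, 1) be two ultra-relativistic speeds. Then the squared Lorentz factor of the relativistic sum satisfies the two-sided bound 4·Γ(v1)²·Γ(v2)²·(1 − ε1 − ε2) ≤ Γ(v2 ⊕ v1)² ≤ 4·Γ(v1)²·Γ(v2)²; in particular Γ(v2 ⊕ v1)² is approximated by 4Γ(v1)²Γ(v2)² with relative error at most ε1 + ε2. -/

import Mathlib

/-- Lorentz factor of a speed `v` (in units of the speed of light): `Γ(v) = 1/√(1 - v²)`. -/
noncomputable def lorentz (v : ℝ) : ℝ := 1 / Real.sqrt (1 - v ^ 2)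

/-- Relativistic addition of velocities. -/
noncomputable def radd (v2 v1 : ℝ) : ℝ := (v2 + v1) / (1 + v2 * v1)

theorem lorentz_sq_aux (v : ℝ) (h : 0 ≤ 1 - v ^ 2) : lorentz v ^ 2 = (1 - v ^ 2)⁻¹ := by
  unfold lorentz
  rw [div_pow, Real.sq_sqrt h, one_pow, one_div]

/-- For ultra-relativistic speeds `v1 = 1 − ε1` and `v2 = 1 − ε2` with `ε1, ε2 ∈ (0,1)`,
the squared Lorentz factor of the relativistic sum satisfies
`4·Γ(v1)²·Γ(v2)²·(1 − ε1 − ε2) ≤ Γ(v2 ⊕ v1)² ≤ 4·Γ(v1)²·Γ(v2)²`;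
in particular `Γ(v2 ⊕ v1)²` is approximated by `4Γ(v1)²Γ(v2)²` with relative error
at most `ε1 + ε2`. -/
theorem lorentz_sq_radd_ultrarelativistic (ε1 ε2 : ℝ)
    (h1 : ε1 ∈ Set.Ioo (0 : ℝ) 1) (h2 : ε2 ∈ Set.Ioo (0 : ℝ) 1) :
    4 * (lorentz (1 - ε1)) ^ 2 * (lorentz (1 - ε2)) ^ 2 * (1 - ε1 - ε2)
      ≤ (lorentz (radd (1 - ε2) (1 - ε1))) ^ 2 ∧
    (lorentz (radd (1 - ε2) (1 - ε1))) ^ 2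
      ≤ 4 * (lorentz (1 - ε1)) ^ 2 * (lorentz (1 - ε2)) ^ 2 := by
  obtain ⟨ha, ha'⟩ := h1
  obtain ⟨hb, hb'⟩ := h2
  have hA : 0 < 1 - (1 - ε1) ^ 2 := by nlinarith
  have hB : 0 < 1 - (1 - ε2) ^ 2 := by nlinarith
  have hp : 0 < (1 - ε2) * (1 - ε1) := mul_pos (by linarith) (by linarith)
  have hD : 0 < 1 + (1 - ε2) * (1 - ε1) := by linarith
  have hC : 1 - (radd (1 - ε2) (1 - ε1)) ^ 2
      = (1 - (1 - ε1) ^ 2) * (1 - (1 - ε2) ^ 2) / (1 + (1 - ε2) * (1 - ε1)) ^ 2 := by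
    unfold radd
    rw [div_pow, eq_div_iff (by positivity), sub_mul, div_mul_cancel₀ _ (by positivity)]
    ring
  have hC0 : 0 ≤ 1 - (radd (1 - ε2) (1 - ε1)) ^ 2 := by
    rw [hC]; positivity
  rw [lorentz_sq_aux _ hA.le, lorentz_sq_aux _ hB.le, lorentz_sq_aux _ hC0, hC, inv_div,
    div_eq_mul_inv, mul_inv]
  have hK : 0 ≤ (1 - (1 - ε1) ^ 2)⁻¹ * (1 - (1 - ε2) ^ 2)⁻¹ := by positivity
  have hab : 0 < ε1 * ε2 := mul_pos ha hb
  have hlow : 4 * (1 - ε1 - ε2) ≤ (1 + (1 - ε2) * (1 - ε1)) ^ 2 := by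
    nlinarith [sq_nonneg (ε1 + ε2), mul_pos hab hD]
  have hup : (1 + (1 - ε2) * (1 - ε1)) ^ 2 ≤ 4 := by nlinarith
  have e1 := mul_le_mul_of_nonneg_right hlow hK
  have e2 := mul_le_mul_of_nonneg_right hup hK
  constructor
  · linarith
  · linarith
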